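/- Let E₁ and E₂ be two concentric, homothetic ellipses in ℝ² that are not circles, with E₁ contained in the interior of E₂. Let [a,a'] be a chord of E₂ that is tangent to E₁ and orthogonal to the major axis of E₂. Then every chord [b,b'] of E₂ tangent to E₁ that is not orthogonal to the major axis of E₂ satisfies |b − b'| > |a − a'|. -/

import Mathlib

/-!
The affine map that divides the coordinate along `e₁` by `A` and the one along `e₂` by `B`
turns `E₂` into the unit circle and `E₁` into the concentric circle of radius `t`. A chord of the
unit circle tangent to the circle of radius `t` has squared length `4 * (1 - t ^ 2)`, so every chord
of `E₂` tangent to `E₁`, with components `u`, `v` along `e₁`, `e₂`, satisfies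
`(u / A) ^ 2 + (v / B) ^ 2 = 4 * (1 - t ^ 2)` (`tangent_chord_scaled`). Its true squared length is
therefore `u ^ 2 + v ^ 2 = 4 * (1 - t ^ 2) * B ^ 2 + (1 - B ^ 2 / A ^ 2) * u ^ 2`, and since `B < A`
this is smallest exactly when `u = 0`, that is, when the chord is orthogonal to the major axis.
-/

open Metric Set
open scoped RealInnerProductSpace

noncomputable section

/-- The line through `a` with direction `u`. -/
def lineThrough (a u : EuclideanSpace ℝ (Fin 2)) : Set (EuclideanSpace ℝ (Fin 2)) :=
  {x | ∃ t : ℝ, x = a + t • u}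

/-- The ellipse with center `c`, orthonormal axis directions `e₁, e₂` and
semi-axes `A, B` (the boundary curve). -/
def ellipse (c e₁ e₂ : EuclideanSpace ℝ (Fin 2)) (A B : ℝ) : Set (EuclideanSpace ℝ (Fin 2)) :=
  {x | (⟪x - c, e₁⟫ / A) ^ 2 + (⟪x - c, e₂⟫ / B) ^ 2 = 1}

/-- The closed region bounded by the ellipse. -/
def ellipseRegion (c e₁ e₂ : EuclideanSpace ℝ (Fin 2)) (A B : ℝ) :
    Set (EuclideanSpace ℝ (Fin 2)) :=
  {x | (⟪x - c, e₁⟫ / A) ^ 2 + (⟪x - c, e₂⟫ / B) ^ 2 ≤ 1}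

/-- The open region bounded by the ellipse. -/
def ellipseInterior (c e₁ e₂ : EuclideanSpace ℝ (Fin 2)) (A B : ℝ) :
    Set (EuclideanSpace ℝ (Fin 2)) :=
  {x | (⟪x - c, e₁⟫ / A) ^ 2 + (⟪x - c, e₂⟫ / B) ^ 2 < 1}

/-- A line is tangent to the ellipse `E₁` if it meets the closed region bounded by `E₁`
but not its interior. -/
def TangentTo (c e₁ e₂ : EuclideanSpace ℝ (Fin 2)) (A B : ℝ)
    (p u : EuclideanSpace ℝ (Fin 2)) : Prop :=
  (lineThrough p u ∩ ellipseRegion c e₁ e₂ A B).Nonempty ∧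
    lineThrough p u ∩ ellipseInterior c e₁ e₂ A B = ∅

/-- Pythagoras in the orthonormal frame `e₁, e₂` of the plane. -/
lemma norm_sq_eq_frame (e₁ e₂ v : EuclideanSpace ℝ (Fin 2))
    (he₁ : ‖e₁‖ = 1) (he₂ : ‖e₂‖ = 1) (he : ⟪e₁, e₂⟫ = 0) :
    ‖v‖ ^ 2 = ⟪v, e₁⟫ ^ 2 + ⟪v, e₂⟫ ^ 2 := by
  have ho : Orthonormal ℝ ![e₁, e₂] := by
    rw [orthonormal_vecCons_iff]
    refine ⟨he₁, ?_, ?_⟩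
    · intro i
      fin_cases i
      simpa using he
    · rw [orthonormal_vecCons_iff]
      exact ⟨he₂, fun i => i.elim0, ⟨fun i => i.elim0, fun i => i.elim0⟩⟩
  let w := basisOfOrthonormalOfCardEqFinrank ho (by simp)
  have hw : ⇑w = ![e₁, e₂] := coe_basisOfOrthonormalOfCardEqFinrank ho (by simp)
  let ob := w.toOrthonormalBasis (by rw [hw]; exact ho)
  have hob : ⇑ob = ![e₁, e₂] := by simp [ob, hw]
  have h := ob.sum_sq_norm_inner_left v
  rw [hob] at h
  simpa [Fin.sum_univ_two] using h.symm

/-- After rescaling the axes, the midpoint `m` of the chord is the point of its line nearest to the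
center, so tangency forces `|m| = t`, while `|m| ^ 2 = 1 - |chord| ^ 2 / 4`. -/
lemma tangent_chord_scaled (c e₁ e₂ : EuclideanSpace ℝ (Fin 2)) (A B t : ℝ)
    (ht0 : 0 < t) (p q : EuclideanSpace ℝ (Fin 2))
    (hp : p ∈ ellipse c e₁ e₂ A B) (hq : q ∈ ellipse c e₁ e₂ A B)
    (htan : TangentTo c e₁ e₂ (t * A) (t * B) p (q - p)) :
    (⟪q - p, e₁⟫ / A) ^ 2 + (⟪q - p, e₂⟫ / B) ^ 2 = 4 * (1 - t ^ 2) := by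
  obtain ⟨⟨x, ⟨s, rfl⟩, hx⟩, hempty⟩ := htan
  have hm : p + (1 / 2 : ℝ) • (q - p) ∉ ellipseInterior c e₁ e₂ (t * A) (t * B) := fun h =>
    Set.eq_empty_iff_forall_notMem.1 hempty _ ⟨⟨1 / 2, rfl⟩, h⟩
  have expand : ∀ (r : ℝ) (e : EuclideanSpace ℝ (Fin 2)) (D : ℝ),
      ⟪p + r • (q - p) - c, e⟫ / (t * D)
        = (⟪p - c, e⟫ / D + r * (⟪q - p, e⟫ / D)) / t := by
    intro r e D
    rw [add_sub_right_comm, inner_add_left, real_inner_smul_left, mul_comm t D, ← div_div]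
    ring
  have split : ∀ (e : EuclideanSpace ℝ (Fin 2)) (D : ℝ),
      ⟪q - c, e⟫ / D = ⟪p - c, e⟫ / D + ⟪q - p, e⟫ / D := by
    intro e D
    rw [← sub_add_sub_cancel' p c q, inner_add_left, add_div]
  simp only [ellipse, ellipseRegion, ellipseInterior, Set.mem_setOf_eq, expand, split, not_lt,
    div_pow (_ + _) t] at hp hq hx hm
  rw [← add_div, div_le_one (by positivity)] at hx
  rw [← add_div, one_le_div (by positivity)] at hm
  generalize ⟪p - c, e₁⟫ / A = X at *
  generalize ⟪p - c, e₂⟫ / B = Y at *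
  generalize ⟪q - p, e₁⟫ / A = u at *
  generalize ⟪q - p, e₂⟫ / B = v at *
  have hXu : 2 * (X * u + Y * v) = -(u ^ 2 + v ^ 2) := by
    linear_combination hq - hp
  -- Along the line, the squared distance to the center is
  -- `1 - (u ^ 2 + v ^ 2) / 4 + (r - 1 / 2) ^ 2 * (u ^ 2 + v ^ 2)` at parameter `r`.
  have key : ∀ r : ℝ, (X + r * u) ^ 2 + (Y + r * v) ^ 2
      = 1 - (u ^ 2 + v ^ 2) / 4 + (r - 1 / 2) ^ 2 * (u ^ 2 + v ^ 2) := by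
    intro r
    linear_combination hp + r * hXu
  rw [key] at hx hm
  have : 0 ≤ (s - 1 / 2) ^ 2 * (u ^ 2 + v ^ 2) := by positivity
  norm_num at hm
  linarith

/-- `E₂` is the ellipse with center `c`, major axis direction `e₁`, semi-axes `A > B`,
and `E₁` is its concentric homothet with ratio `0 < t < 1`.  If the chord `[a,a']` of
`E₂` is tangent to `E₁` and orthogonal to the major axis of `E₂`, then any chord
`[b,b']` of `E₂` tangent to `E₁` and not orthogonal to the major axis is strictly
longer than `[a,a']`. -/
theorem stmt_2 (c e₁ e₂ : EuclideanSpace ℝ (Fin 2))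
    (he₁ : ‖e₁‖ = 1) (he₂ : ‖e₂‖ = 1) (he : ⟪e₁, e₂⟫ = 0)
    (A B : ℝ) (hB : 0 < B) (hBA : B < A)
    (t : ℝ) (ht0 : 0 < t) (ht1 : t < 1)
    (a a' b b' : EuclideanSpace ℝ (Fin 2))
    (haa' : a ≠ a') (hbb' : b ≠ b')
    (haE : a ∈ ellipse c e₁ e₂ A B) (ha'E : a' ∈ ellipse c e₁ e₂ A B)
    (hbE : b ∈ ellipse c e₁ e₂ A B) (hb'E : b' ∈ ellipse c e₁ e₂ A B)
    (htan_a : TangentTo c e₁ e₂ (t * A) (t * B) a (a' - a))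
    (htan_b : TangentTo c e₁ e₂ (t * A) (t * B) b (b' - b))
    (horth_a : ⟪a' - a, e₁⟫ = 0)
    (horth_b : ⟪b' - b, e₁⟫ ≠ 0) :
    dist a a' < dist b b' := by
  have ha := tangent_chord_scaled c e₁ e₂ A B t ht0 a a' haE ha'E htan_a
  have hb := tangent_chord_scaled c e₁ e₂ A B t ht0 b b' hbE hb'E htan_b
  have hA : 0 < A := hB.trans hBA
  rw [dist_comm a, dist_comm b, dist_eq_norm, dist_eq_norm]
  refine lt_of_pow_lt_pow_left₀ 2 (norm_nonneg _) ?_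
  rw [norm_sq_eq_frame e₁ e₂ _ he₁ he₂ he, norm_sq_eq_frame e₁ e₂ (b' - b) he₁ he₂ he]
  rw [horth_a] at ha ⊢
  generalize ⟪a' - a, e₂⟫ = w at *
  generalize ⟪b' - b, e₁⟫ = u at *
  generalize ⟪b' - b, e₂⟫ = v at *
  have hw : w ^ 2 = 4 * (1 - t ^ 2) * B ^ 2 := by
    rw [← ha]; field_simp; ring
  have hv : v ^ 2 = 4 * (1 - t ^ 2) * B ^ 2 - (B / A) ^ 2 * u ^ 2 := by
    rw [← hb]; field_simp; ring
  have hratio : (B / A) ^ 2 < 1 :=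
    pow_lt_one₀ (by positivity) ((div_lt_one hA).2 hBA) two_ne_zero
  have hu : 0 < u ^ 2 := by positivity
  have := mul_lt_mul_of_pos_right hratio hu
  linarith
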